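/- Let A and B be invertible 3×3 real matrices admitting proximal decompositions A = L₁·p₁ + L₂·p₂ + L₃·p₃ and B = M₁·q₁ + M₂·q₂ + M₃·q₃, and suppose tr(p₁·q₁) ≠ 0 and tr(p₃·q₃) ≠ 0. Then the sequence (λ₁(AⁿBⁿ)/λ₃(AⁿBⁿ)) · (λ₃(Aⁿ)/λ₁(Aⁿ)) · (λ₃(Bⁿ)/λ₁(Bⁿ)) converges, as n → ∞, to |tr(p₁·q₁) · tr(p₃·q₃)|, and this limit is nonzero. -/

import Mathlib

open scoped BigOperators

/-- The spectral radius of a real `d × d` matrix: the maximum of the absolute values of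
its complex eigenvalues, i.e. `λ₁(C)`. -/
noncomputable def specRad {d : ℕ} (C : Matrix (Fin d) (Fin d) ℝ) : ℝ :=
  (spectralRadius ℂ (C.map (Complex.ofReal))).toReal

/-- `λ_d(C) = λ₁(C⁻¹)⁻¹`, the smallest absolute value of a complex eigenvalue of an
invertible matrix `C`. -/
noncomputable def lamLast {d : ℕ} (C : Matrix (Fin d) (Fin d) ℝ) : ℝ :=
  (specRad C⁻¹)⁻¹

/-- A proximal decomposition `A = L₁ p₁ + ⋯ + L_d p_d` of a `d × d` real matrix:
`|L₁| > |L₂| > ⋯ > |L_d| > 0` and the `pᵢ` are rank-one projections with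
`pᵢ pⱼ = 0` for `i ≠ j`, `pᵢ² = pᵢ` and `p₁ + ⋯ + p_d = 1`. -/
structure ProximalDecomp {d : ℕ} (A : Matrix (Fin d) (Fin d) ℝ) where
  L : Fin d → ℝ
  p : Fin d → Matrix (Fin d) (Fin d) ℝ
  strictAnti : StrictAnti fun i => |L i|
  abs_pos : ∀ i, 0 < |L i|
  rank_one : ∀ i, (p i).rank = 1
  mul_eq_zero : ∀ i j, i ≠ j → p i * p j = 0
  idem : ∀ i, p i * p i = p i
  sum_eq_one : ∑ i, p i = 1
  decomp : A = ∑ i, L i • p i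

/-!
The spectral radius `λ₁` is continuous on matrices, because the roots of the characteristic
polynomial depend continuously on it, and `λ₁ P = |tr P|` when `P` has rank at most one. Since
`L₁⁻ⁿ Aⁿ → p₁` and `M₁⁻ⁿ Bⁿ → q₁`, and scalars cancel in the quotient,
`λ₁(AⁿBⁿ) / (λ₁(Aⁿ) λ₁(Bⁿ)) → |tr (p₁ q₁)|`. The same limit for `B⁻¹` and `A⁻¹`, whose leading
projections are `q_d` and `p_d`, supplies the other factor, as `λ_d(C) = λ₁(C⁻¹)⁻¹` and
`(AⁿBⁿ)⁻¹ = (B⁻¹)ⁿ(A⁻¹)ⁿ`.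
-/

open Filter Topology Polynomial

section RankOne

variable {K m n : Type*} [Field K] [Fintype n]

theorem exists_eq_vecMulVec_of_rank_le_one [Finite m] {P : Matrix m n K} (hP : P.rank ≤ 1) :
    ∃ (u : m → K) (v : n → K), P = Matrix.vecMulVec u v := by
  classical
  have := Fintype.ofFinite m
  obtain ⟨⟨u, hu⟩⟩ := (Submodule.finrank_le_one_iff_isPrincipal _).1 hP
  have hcol (j : n) : ∃ c : K, c • u = P.col j := by
    rw [← Submodule.mem_span_singleton, ← hu]
    exact ⟨Pi.single j 1, by simp⟩
  choose v hv using hcol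
  refine ⟨u, v, ?_⟩
  ext i j
  simpa [Matrix.vecMulVec_apply, mul_comm] using (congrFun (hv j) i).symm

theorem trace_eq_rank_of_isIdempotentElem {P : Matrix n n K} (hP : IsIdempotentElem P) :
    P.trace = P.rank := by
  classical
  have hlin : IsIdempotentElem P.toLin' := hP.map Matrix.toLinAlgEquiv'
  rw [← Matrix.trace_toLin'_eq, (P.toLin'.isProj_range_iff_isIdempotentElem.2 hlin).trace]
  rfl

end RankOne

section SpectralRadius

theorem exists_mem_roots_norm_sub_lt {K : Type*} [NormedField K] {p : K[X]} (hp : p.Splits)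
    (hmonic : p.Monic) {z : K} {δ : ℝ} (hδ : 0 ≤ δ) (hz : ‖p.eval z‖ < δ ^ p.natDegree) :
    ∃ w ∈ p.roots, ‖z - w‖ < δ := by
  by_contra! hfar
  refine hz.not_ge ?_
  calc δ ^ p.natDegree = (p.roots.map fun _ => δ).prod := by
        rw [Multiset.map_const', Multiset.prod_replicate, hp.natDegree_eq_card_roots]
    _ ≤ (p.roots.map fun w => ‖z - w‖).prod :=
        Multiset.prod_map_le_prod_map₀ _ _ (fun _ _ => hδ) hfar
    _ = ‖p.eval z‖ := by
        rw [hp.eval_eq_prod_roots_of_monic hmonic]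
        exact Multiset.prod_hom' _ (normHom : K →*₀ ℝ) _

theorem lowerHemicontinuous_spectrum_matrix {K n : Type*} [NormedField K] [IsAlgClosed K]
    [Fintype n] [DecidableEq n] :
    LowerHemicontinuous (spectrum K : Matrix n n K → Set K) := by
  rw [lowerHemicontinuous_iff]
  intro M
  rw [lowerHemicontinuousAt_iff]
  rintro U hU ⟨z, hzM, hzU⟩
  obtain ⟨δ, hδ, hball⟩ := Metric.isOpen_iff.1 hU z hzU
  have hcont : Continuous fun N : Matrix n n K => ‖N.charpoly.eval z‖ := by
    simp only [Matrix.eval_charpoly]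
    fun_prop
  have hsmall : ‖M.charpoly.eval z‖ < δ ^ Fintype.card n := by
    rw [(Matrix.mem_spectrum_iff_isRoot_charpoly.1 hzM).eq_zero, norm_zero]
    exact pow_pos hδ _
  filter_upwards [hcont.continuousAt.eventually_lt_const hsmall] with N hN
  rw [← N.charpoly_natDegree_eq_dim] at hN
  obtain ⟨w, hw, hzw⟩ :=
    exists_mem_roots_norm_sub_lt (IsAlgClosed.splits _) N.charpoly_monic hδ.le hN
  refine ⟨w, Matrix.mem_spectrum_of_isRoot_charpoly (isRoot_of_mem_roots hw), hball ?_⟩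
  rwa [mem_ball_iff_norm']

variable {d : ℕ} [NeZero d]

section

attribute [local instance] Matrix.linftyOpNormedRing Matrix.linftyOpNormedAlgebra

theorem isGreatest_specRad (C : Matrix (Fin d) (Fin d) ℝ) :
    IsGreatest (norm '' spectrum ℂ (C.map Complex.ofReal)) (specRad C) := by
  obtain ⟨z, hz, hzC⟩ := spectrum.exists_nnnorm_eq_spectralRadius (C.map Complex.ofReal)
  have hnorm : ‖z‖ = specRad C := by simp [specRad, ← hzC]
  refine ⟨⟨z, hz, hnorm⟩, ?_⟩
  rintro _ ⟨w, hw, rfl⟩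
  rw [← hnorm, ← coe_nnnorm, ← coe_nnnorm, NNReal.coe_le_coe, ← ENNReal.coe_le_coe, hzC]
  exact le_iSup₂ (α := ENNReal) w hw

theorem continuous_specRad : Continuous (specRad : Matrix (Fin d) (Fin d) ℝ → ℝ) := by
  have hmap : Continuous fun C : Matrix (Fin d) (Fin d) ℝ => C.map Complex.ofReal :=
    continuous_id.matrix_map Complex.continuous_ofReal
  refine continuous_iff_continuousAt.2 fun C => tendsto_order.2 ⟨fun a ha => ?_, fun a ha => ?_⟩
  · obtain ⟨z, hz, hzC⟩ := (isGreatest_specRad C).1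
    have hlower := lowerHemicontinuousAt_iff.1 (lowerHemicontinuous_iff.1
      lowerHemicontinuous_spectrum_matrix (C.map Complex.ofReal)) {w | a < ‖w‖}
      (isOpen_lt continuous_const continuous_norm) ⟨z, hz, ha.trans_eq hzC.symm⟩
    filter_upwards [hmap.continuousAt.eventually hlower] with D ⟨w, hw, haw⟩
    exact haw.trans_le ((isGreatest_specRad D).2 ⟨w, hw, rfl⟩)
  · have hupper := (upperHemicontinuous_spectrum ℂ _).forall_isOpen (C.map Complex.ofReal)
      {w | ‖w‖ < a} (isOpen_lt continuous_norm continuous_const)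
      fun w hw => ((isGreatest_specRad C).2 ⟨w, hw, rfl⟩).trans_lt ha
    filter_upwards [hmap.continuousAt.eventually hupper] with D hD
    obtain ⟨w, hw, hwD⟩ := (isGreatest_specRad D).1
    exact hwD ▸ hD hw

end

theorem specRad_smul (c : ℝ) (C : Matrix (Fin d) (Fin d) ℝ) :
    specRad (c • C) = |c| * specRad C := by
  have hmap : (c • C).map Complex.ofReal = (c : ℂ) • C.map Complex.ofReal := by
    ext i j
    simp
  obtain ⟨⟨z, hz, hzC⟩, hub⟩ := isGreatest_specRad C
  refine (isGreatest_specRad (c • C)).unique ?_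
  rw [hmap, spectrum.smul_eq_smul _ _ ⟨z, hz⟩]
  refine ⟨⟨c • z, ⟨z, hz, by simp⟩, by simp [hzC]⟩, ?_⟩
  rintro _ ⟨_, ⟨w, hw, rfl⟩, rfl⟩
  simpa using mul_le_mul_of_nonneg_left (hub ⟨w, hw, rfl⟩) (abs_nonneg c)

theorem specRad_vecMulVec (u v : Fin d → ℝ) :
    specRad (Matrix.vecMulVec u v) = |u ⬝ᵥ v| := by
  have hspec (z : ℂ) : z ∈ spectrum ℂ ((Matrix.vecMulVec u v).map Complex.ofReal) ↔
      z ^ d = (u ⬝ᵥ v : ℝ) * z ^ (d - 1) := by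
    have hcharpoly : ((Matrix.vecMulVec u v).map Complex.ofReal).charpoly =
        ((X : ℝ[X]) ^ Fintype.card (Fin d) -
          (u ⬝ᵥ v) • X ^ (Fintype.card (Fin d) - 1)).map Complex.ofRealHom := by
      rw [← Matrix.charpoly_vecMulVec, ← Matrix.charpoly_map]
      rfl
    simp [Matrix.mem_spectrum_iff_isRoot_charpoly, hcharpoly, sub_eq_zero]
  refine (isGreatest_specRad _).unique ⟨⟨(u ⬝ᵥ v : ℝ), ?_, by simp⟩, ?_⟩
  · rw [hspec, mul_pow_sub_one (NeZero.ne d)]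
  · rintro _ ⟨z, hz, rfl⟩
    rw [hspec, ← mul_pow_sub_one (NeZero.ne d) z, mul_eq_mul_right_iff] at hz
    rcases hz with rfl | hz
    · simp
    · simp [eq_zero_of_pow_eq_zero hz]

theorem specRad_of_rank_le_one {P : Matrix (Fin d) (Fin d) ℝ} (hP : P.rank ≤ 1) :
    specRad P = |P.trace| := by
  obtain ⟨u, v, rfl⟩ := exists_eq_vecMulVec_of_rank_le_one hP
  rw [specRad_vecMulVec, Matrix.trace_vecMulVec]

end SpectralRadius

/-- The algebra homomorphism `a ↦ ∑ i, a i • e i` attached to a complete family of orthogonal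
idempotents: the functional calculus of the operators that are diagonal with respect to `e`. -/
def idempotentsAlgHom (K : Type*) {ι R : Type*} [CommSemiring K] [Semiring R] [Algebra K R]
    [Fintype ι] {e : ι → R} (he : CompleteOrthogonalIdempotents e) : (ι → K) →ₐ[K] R :=
  AlgHom.ofLinearMap (Fintype.linearCombination K e)
    (by simp [Fintype.linearCombination_apply, he.complete]) fun a b => by
      classical
      simp [Fintype.linearCombination_apply, Finset.sum_mul_sum, he.mul_eq, smul_smul, mul_comm]

namespace ProximalDecomp

variable {d : ℕ} {A B : Matrix (Fin d) (Fin d) ℝ}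

theorem completeOrthogonalIdempotents (D : ProximalDecomp A) :
    CompleteOrthogonalIdempotents D.p where
  idem := D.idem
  ortho := fun i j => D.mul_eq_zero i j
  complete := D.sum_eq_one

/-- The functional calculus `f ↦ f₁ p₁ + ⋯ + f_d p_d` of a proximal decomposition. -/
noncomputable def calculus (D : ProximalDecomp A) :
    (Fin d → ℝ) →ₐ[ℝ] Matrix (Fin d) (Fin d) ℝ :=
  idempotentsAlgHom ℝ D.completeOrthogonalIdempotents

theorem calculus_apply (D : ProximalDecomp A) (f : Fin d → ℝ) :
    D.calculus f = ∑ i, f i • D.p i :=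
  rfl

theorem calculus_L (D : ProximalDecomp A) : D.calculus D.L = A :=
  D.decomp.symm

theorem calculus_single (D : ProximalDecomp A) (i : Fin d) :
    D.calculus (Pi.single i 1) = D.p i := by
  simp [calculus_apply, Pi.single_apply]

theorem L_ne_zero (D : ProximalDecomp A) (i : Fin d) : D.L i ≠ 0 :=
  _root_.abs_pos.1 (D.abs_pos i)

theorem calculus_inv_L (D : ProximalDecomp A) : D.calculus D.L⁻¹ = A⁻¹ := by
  have hL : D.L * D.L⁻¹ = 1 := funext fun i => mul_inv_cancel₀ (D.L_ne_zero i)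
  refine (Matrix.inv_eq_right_inv ?_).symm
  nth_rw 1 [← D.calculus_L, ← map_mul, hL, map_one]

/-- The proximal decomposition of the inverse, whose indices are reversed. -/
noncomputable def inv (D : ProximalDecomp A) : ProximalDecomp A⁻¹ where
  L i := (D.L i.rev)⁻¹
  p i := D.p i.rev
  strictAnti i j hij := by
    simp only [abs_inv]
    exact inv_strictAnti₀ (D.abs_pos _) (D.strictAnti (Fin.rev_lt_rev.2 hij))
  abs_pos i := _root_.abs_pos.2 (inv_ne_zero (D.L_ne_zero _))
  rank_one i := D.rank_one _
  mul_eq_zero i j hij := D.mul_eq_zero _ _ (Fin.rev_injective.ne hij)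
  idem i := D.idem _
  sum_eq_one := (Equiv.sum_comp Fin.revPerm D.p).trans D.sum_eq_one
  decomp := by
    rw [← D.calculus_inv_L, D.calculus_apply]
    exact (Equiv.sum_comp Fin.revPerm fun i => (D.L i)⁻¹ • D.p i).symm

variable [NeZero d]

theorem tendsto_inv_smul_pow (D : ProximalDecomp A) :
    Tendsto (fun n : ℕ => (D.L 0 ^ n)⁻¹ • A ^ n) atTop (𝓝 (D.p 0)) := by
  have hratio : Tendsto (fun n : ℕ => (D.L 0 ^ n)⁻¹ • D.L ^ n) atTop (𝓝 (Pi.single 0 1)) := by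
    refine tendsto_pi_nhds.2 fun i => ?_
    simp only [Pi.smul_apply, Pi.pow_apply, smul_eq_mul, ← div_eq_inv_mul, ← div_pow]
    rcases eq_or_ne i 0 with rfl | hi
    · simp [D.L_ne_zero]
    · rw [Pi.single_eq_of_ne hi]
      refine tendsto_pow_atTop_nhds_zero_of_abs_lt_one ?_
      rw [abs_div, div_lt_one (D.abs_pos 0)]
      exact D.strictAnti (Fin.pos_iff_ne_zero.2 hi)
  have hcont : Continuous D.calculus := D.calculus.toLinearMap.continuous_of_finiteDimensional
  simpa only [map_smul, map_pow, D.calculus_L, D.calculus_single, Function.comp_def] using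
    (hcont.tendsto _).comp hratio

theorem specRad_p (D : ProximalDecomp A) (i : Fin d) : specRad (D.p i) = 1 := by
  rw [specRad_of_rank_le_one (D.rank_one i).le, trace_eq_rank_of_isIdempotentElem (D.idem i),
    D.rank_one, Nat.cast_one, abs_one]

theorem tendsto_specRad_pow_mul_pow_div (D : ProximalDecomp A) (E : ProximalDecomp B) :
    Tendsto (fun n : ℕ => specRad (A ^ n * B ^ n) / (specRad (A ^ n) * specRad (B ^ n))) atTop
      (𝓝 |(D.p 0 * E.p 0).trace|) := by
  have hrank : (D.p 0 * E.p 0).rank ≤ 1 :=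
    (Matrix.rank_mul_le_left _ _).trans (D.rank_one 0).le
  have hspec {F : ℕ → Matrix (Fin d) (Fin d) ℝ} {P : Matrix (Fin d) (Fin d) ℝ}
      (hF : Tendsto F atTop (𝓝 P)) : Tendsto (fun n => specRad (F n)) atTop (𝓝 (specRad P)) :=
    (continuous_specRad.tendsto P).comp hF
  have hlim := (hspec (D.tendsto_inv_smul_pow.mul E.tendsto_inv_smul_pow)).div
    ((hspec D.tendsto_inv_smul_pow).mul (hspec E.tendsto_inv_smul_pow)) (by simp [specRad_p])
  rw [D.specRad_p, E.specRad_p, mul_one, div_one, specRad_of_rank_le_one hrank] at hlim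
  refine hlim.congr fun n => ?_
  have hD : |(D.L 0 ^ n)⁻¹| ≠ 0 := abs_ne_zero.2 (inv_ne_zero (pow_ne_zero n (D.L_ne_zero 0)))
  have hE : |(E.L 0 ^ n)⁻¹| ≠ 0 := abs_ne_zero.2 (inv_ne_zero (pow_ne_zero n (E.L_ne_zero 0)))
  rw [Pi.div_apply, smul_mul_smul_comm, specRad_smul, specRad_smul, specRad_smul, abs_mul,
    mul_mul_mul_comm, mul_div_mul_left _ _ (mul_ne_zero hD hE)]

end ProximalDecomp

theorem hilbert_trace_identity_general {d : ℕ} {A B : Matrix (Fin (d + 1)) (Fin (d + 1)) ℝ}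
    (DA : ProximalDecomp A) (DB : ProximalDecomp B) :
    Tendsto (fun n : ℕ =>
        specRad (A ^ n * B ^ n) / lamLast (A ^ n * B ^ n) *
          (lamLast (A ^ n) / specRad (A ^ n)) *
          (lamLast (B ^ n) / specRad (B ^ n))) atTop
      (𝓝 |(DA.p 0 * DB.p 0).trace * (DA.p (Fin.last d) * DB.p (Fin.last d)).trace|) := by
  have htrace : (DB.inv.p 0 * DA.inv.p 0).trace =
      (DA.p (Fin.last d) * DB.p (Fin.last d)).trace := Matrix.trace_mul_comm _ _
  rw [← htrace, abs_mul]
  refine ((DA.tendsto_specRad_pow_mul_pow_div DB).mul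
    (DB.inv.tendsto_specRad_pow_mul_pow_div DA.inv)).congr fun n => ?_
  simp only [lamLast, Matrix.mul_inv_rev, Matrix.inv_pow', div_eq_mul_inv, inv_inv, mul_inv]
  ring

open Filter in
/-- For invertible `3 × 3` real matrices `A`, `B` with proximal decompositions such that
`tr (p₁ q₁) ≠ 0` and `tr (p₃ q₃) ≠ 0`, the sequence
`(λ₁(AⁿBⁿ)/λ₃(AⁿBⁿ)) ⬝ (λ₃(Aⁿ)/λ₁(Aⁿ)) ⬝ (λ₃(Bⁿ)/λ₁(Bⁿ))` converges to
`|tr (p₁ q₁) ⬝ tr (p₃ q₃)|`, which is nonzero. -/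
theorem hilbert_trace_identity
    (A B : Matrix (Fin 3) (Fin 3) ℝ) (hA : IsUnit A) (hB : IsUnit B)
    (DA : ProximalDecomp A) (DB : ProximalDecomp B)
    (h1 : (DA.p 0 * DB.p 0).trace ≠ 0)
    (h3 : (DA.p 2 * DB.p 2).trace ≠ 0) :
    Tendsto (fun n : ℕ =>
        specRad (A ^ n * B ^ n) / lamLast (A ^ n * B ^ n) *
          (lamLast (A ^ n) / specRad (A ^ n)) *
          (lamLast (B ^ n) / specRad (B ^ n))) atTop
      (nhds |(DA.p 0 * DB.p 0).trace * (DA.p 2 * DB.p 2).trace|) ∧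
    |(DA.p 0 * DB.p 0).trace * (DA.p 2 * DB.p 2).trace| ≠ 0 :=
  ⟨hilbert_trace_identity_general DA DB, abs_ne_zero.2 (mul_ne_zero h1 h3)⟩
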